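/- Let T = (V,E) be a finite tree, let λ > 0, and let e, g, f be three distinct edges of T such that e and f lie in different connected components of the graph obtained from T by deleting the edge g (i.e., g separates e from f). Then, for the monomer-dimer model on T with fugacity λ, the pairwise influence factorizes: I_T(e→f) = I_T(e→g) · I_T(g→f). -/

import Mathlib

/-!
Deleting the edge `g` splits the other edges of `T` into those in the component of `e` and the
rest, and `f` is among the rest.  No edge of the first kind shares a vertex with one of the second,
so two matchings which agree on whether they contain `g` can exchange their parts in the component
of `e` and remain matchings (`IsMatchingSet.exchange_of_cutOff`).  The exchange is an involution on
pairs of edge sets that preserves the product of weights, which gives the spatial Markov property: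
conditionally on the state of `g`, the events `e ∈ M` and `f ∈ M` are independent (`mdMass_markov`).
So `e`, `g`, `f` form a two-state Markov chain, and in such a chain influences multiply: by total
probability, with state `1` meaning membership in the matching,
`Pr[f = 1 | e = x] = ∑ y, Pr[g = y | e = x] * Pr[f = 1 | g = y]`, and the two coefficients
`Pr[g = y | e = 1] - Pr[g = y | e = 0]`, for `y = 1` and `y = 0`, sum to zero
(`markov_chain_algebra`).
-/

open Finset

attribute [local instance] Classical.propDecidable

noncomputable section

variable {V : Type} [Fintype V] [DecidableEq V]

/-- `M` is (the edge set of) a matching of `G`: all its members are edges of `G` and no two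
distinct members share a vertex. -/
def IsMatchingSet (G : SimpleGraph V) (M : Finset (Sym2 V)) : Prop :=
  ↑M ⊆ G.edgeSet ∧ ∀ e ∈ M, ∀ f ∈ M, e ≠ f → ∀ v : V, v ∈ e → v ∉ f

/-- Weight `λ^{|M|}` of a matching `M` in the monomer-dimer model (zero otherwise). -/
def mdWeight (G : SimpleGraph V) (lam : ℝ) (M : Finset (Sym2 V)) : ℝ :=
  if IsMatchingSet G M then lam ^ M.card else 0

/-- Total monomer-dimer weight of the event `P`. -/
def mdMass (G : SimpleGraph V) (lam : ℝ) (P : Finset (Sym2 V) → Prop) : ℝ :=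
  ∑ M : Finset (Sym2 V), if P M then mdWeight G lam M else 0

/-- Conditional probability of the event `P` given the event `Q` under the monomer-dimer
distribution on `G` with fugacity `λ`. -/
def mdCondPr (G : SimpleGraph V) (lam : ℝ) (P Q : Finset (Sym2 V) → Prop) : ℝ :=
  mdMass G lam (fun M => P M ∧ Q M) / mdMass G lam Q

/-- Pairwise influence `I_G^τ(e→f)` of edge `e` on edge `f`, conditioned on an event `Q`
(describing a boundary condition):
`Pr[f ∈ M | e ∈ M, Q] − Pr[f ∈ M | e ∉ M, Q]`.
(Here `e ∈ M`, i.e. `σ_e = 0`, means that `e` belongs to the matching.) -/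
def mdInfluence (G : SimpleGraph V) (lam : ℝ) (e f : Sym2 V)
    (Q : Finset (Sym2 V) → Prop) : ℝ :=
  mdCondPr G lam (fun M => f ∈ M) (fun M => e ∈ M ∧ Q M)
    - mdCondPr G lam (fun M => f ∈ M) (fun M => e ∉ M ∧ Q M)

end

section Exchange

set_option linter.unusedSectionVars false

variable {V : Type} [Fintype V] [DecidableEq V]

/-- The set that agrees with `M` on `L` and with `N` off `L`. -/
noncomputable def exchange (L : Sym2 V → Prop) (M N : Finset (Sym2 V)) : Finset (Sym2 V) :=
  M.filter L ∪ N.filter (fun a => ¬ L a)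

theorem mem_exchange {L : Sym2 V → Prop} {M N : Finset (Sym2 V)} {a : Sym2 V} :
    a ∈ exchange L M N ↔ (a ∈ M ∧ L a) ∨ (a ∈ N ∧ ¬ L a) := by
  simp [exchange]

theorem exchange_exchange (L : Sym2 V → Prop) (M N : Finset (Sym2 V)) :
    exchange L (exchange L M N) (exchange L N M) = M := by
  ext a
  simp only [mem_exchange]
  tauto

theorem card_exchange_add (L : Sym2 V → Prop) (M N : Finset (Sym2 V)) :
    (exchange L M N).card + (exchange L N M).card = M.card + N.card := by
  have key : ∀ A B : Finset (Sym2 V), (exchange L A B).card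
      = (A.filter L).card + (B.filter (fun a => ¬ L a)).card := by
    intro A B
    refine Finset.card_union_of_disjoint (Finset.disjoint_left.2 fun a ha hb => ?_)
    exact (Finset.mem_filter.1 hb).2 (Finset.mem_filter.1 ha).2
  have hM := Finset.card_filter_add_card_filter_not (s := M) L
  have hN := Finset.card_filter_add_card_filter_not (s := N) L
  rw [key, key]
  omega

/-- The edges in `L`, which does not contain `g`, are cut off from the other edges of `G` by `g`: an
edge in `L` and an edge outside `L` can share a vertex only if the latter is `g`. -/
def CutOff (G : SimpleGraph V) (g : Sym2 V) (L : Sym2 V → Prop) : Prop :=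
  ¬ L g ∧ ∀ a ∈ G.edgeSet, ∀ b ∈ G.edgeSet, L a → ¬ L b → ∀ v, v ∈ a → v ∈ b → b = g

variable {G : SimpleGraph V} {g : Sym2 V} {L : Sym2 V → Prop}

/-- The edges other than `g` contained in the component of `u` in `G - g` are cut off by `g`. -/
theorem cutOff_component (G : SimpleGraph V) (g : Sym2 V) (u : V) :
    CutOff G g (fun a => a ≠ g ∧ ∀ v ∈ a, (G.deleteEdges {g}).Reachable u v) := by
  refine ⟨fun h => h.1 rfl, fun a _ b hb ha hLb v hva hvb => ?_⟩
  by_contra hbg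
  refine hLb ⟨hbg, fun w hw => (ha.2 v hva).trans ?_⟩
  by_cases hvw : v = w
  · rw [hvw]
  have hb' : b = s(v, w) := ((Sym2.mem_and_mem_iff hvw).1 ⟨hvb, hw⟩)
  subst hb'
  apply SimpleGraph.Adj.reachable
  rw [SimpleGraph.deleteEdges_adj]
  exact ⟨hb, hbg⟩

/-- If `M` and `N` agree on `g`, then replacing the part of `N` in `L` by that of `M` gives a
matching. -/
theorem IsMatchingSet.exchange_of_cutOff (hL : CutOff G g L) {M N : Finset (Sym2 V)}
    (hM : IsMatchingSet G M) (hN : IsMatchingSet G N) (hg : g ∈ M ↔ g ∈ N) :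
    IsMatchingSet G (exchange L M N) := by
  -- A conflict across the cut must involve `g`, hence already occurs inside `M`.
  have cross : ∀ a ∈ M, ∀ b ∈ N, L a → ¬ L b → ∀ v, v ∈ a → v ∈ b → False := by
    intro a ha b hb hLa hLb v hva hvb
    obtain rfl := hL.2 a (hM.1 ha) b (hN.1 hb) hLa hLb v hva hvb
    exact hM.2 a ha b (hg.2 hb) (fun h => hLb (h ▸ hLa)) v hva hvb
  refine ⟨fun a ha => ?_, fun a ha b hb hab v hva hvb => ?_⟩
  · rcases mem_exchange.1 (Finset.mem_coe.1 ha) with h | h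
    · exact hM.1 h.1
    · exact hN.1 h.1
  · rcases mem_exchange.1 ha with ha | ha <;> rcases mem_exchange.1 hb with hb | hb
    · exact hM.2 a ha.1 b hb.1 hab v hva hvb
    · exact cross a ha.1 b hb.1 ha.2 hb.2 v hva hvb
    · exact cross b hb.1 a ha.1 hb.2 ha.2 v hvb hva
    · exact hN.2 a ha.1 b hb.1 hab v hva hvb

theorem mdWeight_exchange (lam : ℝ) (hL : CutOff G g L) (M N : Finset (Sym2 V))
    (hg : g ∈ M ↔ g ∈ N) :
    mdWeight G lam M * mdWeight G lam N
      = mdWeight G lam (exchange L M N) * mdWeight G lam (exchange L N M) := by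
  have hgM : g ∈ exchange L M N ↔ g ∈ N := by
    rw [mem_exchange]; have := hL.1; tauto
  have hgN : g ∈ exchange L N M ↔ g ∈ M := by
    rw [mem_exchange]; have := hL.1; tauto
  have hiff : (IsMatchingSet G M ∧ IsMatchingSet G N) ↔
      (IsMatchingSet G (exchange L M N) ∧ IsMatchingSet G (exchange L N M)) := by
    constructor
    · rintro ⟨h1, h2⟩
      exact ⟨h1.exchange_of_cutOff hL h2 hg, h2.exchange_of_cutOff hL h1 hg.symm⟩
    · rintro ⟨h1, h2⟩
      have h3 := h1.exchange_of_cutOff hL h2 (by tauto)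
      have h4 := h2.exchange_of_cutOff hL h1 (by tauto)
      rw [exchange_exchange] at h3 h4
      exact ⟨h3, h4⟩
  have hprod : ∀ A B : Finset (Sym2 V), mdWeight G lam A * mdWeight G lam B
      = if IsMatchingSet G A ∧ IsMatchingSet G B then lam ^ (A.card + B.card) else 0 := by
    intro A B
    unfold mdWeight
    by_cases hA : IsMatchingSet G A <;> by_cases hB : IsMatchingSet G B <;>
      simp [hA, hB, pow_add]
  rw [hprod, hprod, card_exchange_add]
  simp only [hiff]

theorem mdMass_mul (lam : ℝ) (P Q : Finset (Sym2 V) → Prop) :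
    mdMass G lam P * mdMass G lam Q = ∑ p : Finset (Sym2 V) × Finset (Sym2 V),
      if P p.1 ∧ Q p.2 then mdWeight G lam p.1 * mdWeight G lam p.2 else 0 := by
  unfold mdMass
  rw [Finset.sum_mul_sum, Fintype.sum_prod_type]
  refine Finset.sum_congr rfl fun M _ => Finset.sum_congr rfl fun N _ => ?_
  by_cases hP : P M <;> by_cases hQ : Q N <;> simp [hP, hQ]

/-- Spatial Markov property: conditionally on the state of `g` (the event `B`, which by
`hB` fixes whether `g ∈ M`), an event `A` about whether `e ∈ M`, for `e` in `L`, is independent of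
`f ∈ M`, for `f` not in `L`. Stated without divisions, so no event needs positive mass. -/
theorem mdMass_markov (lam : ℝ) (hL : CutOff G g L) {e f : Sym2 V} (he : L e) (hf : ¬ L f)
    (A B : Prop → Prop) (hB : ∀ p q, B p → B q → (p ↔ q)) :
    mdMass G lam (fun M => A (e ∈ M) ∧ B (g ∈ M) ∧ f ∈ M) * mdMass G lam (fun M => B (g ∈ M))
      = mdMass G lam (fun M => A (e ∈ M) ∧ B (g ∈ M))
        * mdMass G lam (fun M => B (g ∈ M) ∧ f ∈ M) := by
  have hg := hL.1
  have eL : ∀ M N, (e ∈ exchange L M N) = (e ∈ M) := fun M N => by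
    rw [mem_exchange]; exact propext (by tauto)
  have gL : ∀ M N, (g ∈ exchange L M N) = (g ∈ N) := fun M N => by
    rw [mem_exchange]; exact propext (by tauto)
  have fL : ∀ M N, (f ∈ exchange L M N) = (f ∈ N) := fun M N => by
    rw [mem_exchange]; exact propext (by tauto)
  rw [mdMass_mul, mdMass_mul]
  refine Finset.sum_nbij' (fun p => (exchange L p.1 p.2, exchange L p.2 p.1))
    (fun p => (exchange L p.1 p.2, exchange L p.2 p.1)) (by simp) (by simp)
    (fun p _ => by simp [exchange_exchange]) (fun p _ => by simp [exchange_exchange])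
    (fun p _ => ?_)
  simp only [eL, gL, fL]
  by_cases h : B (g ∈ p.1) ∧ B (g ∈ p.2)
  · rw [mdWeight_exchange lam hL p.1 p.2 (hB _ _ h.1 h.2)]
    split_ifs <;> first | rfl | (exfalso; tauto)
  · rw [if_neg (by tauto), if_neg (by tauto)]

theorem mdMass_split (lam : ℝ) (P Q : Finset (Sym2 V) → Prop) :
    mdMass G lam P = mdMass G lam (fun M => P M ∧ Q M) + mdMass G lam (fun M => P M ∧ ¬ Q M) := by
  unfold mdMass
  rw [← Finset.sum_add_distrib]
  refine Finset.sum_congr rfl fun M _ => ?_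
  by_cases hP : P M <;> by_cases hQ : Q M <;> simp [hP, hQ]

theorem mdMass_congr (lam : ℝ) {P Q : Finset (Sym2 V) → Prop} (h : ∀ M, P M ↔ Q M) :
    mdMass G lam P = mdMass G lam Q := by
  rw [show P = Q from funext fun M => propext (h M)]

theorem mdMass_pos {lam : ℝ} (hlam : 0 < lam) {P : Finset (Sym2 V) → Prop}
    (M : Finset (Sym2 V)) (hM : IsMatchingSet G M) (hP : P M) : 0 < mdMass G lam P := by
  refine Finset.sum_pos' (fun N _ => ?_) ⟨M, Finset.mem_univ _, ?_⟩
  · unfold mdWeight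
    split_ifs <;> positivity
  · rw [if_pos hP, mdWeight, if_pos hM]
    positivity

theorem mdMass_mem_pos {lam : ℝ} (hlam : 0 < lam) {a : Sym2 V} (ha : a ∈ G.edgeSet) :
    0 < mdMass G lam (fun M => a ∈ M) := by
  refine mdMass_pos hlam {a} ⟨by simpa using ha, ?_⟩ (by simp)
  intro b hb c hc hbc
  rw [Finset.mem_singleton] at hb hc
  exact absurd (hb.trans hc.symm) hbc

theorem mdMass_not_mem_pos {lam : ℝ} (hlam : 0 < lam) (a : Sym2 V) :
    0 < mdMass G lam (fun M => a ∉ M) :=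
  mdMass_pos hlam ∅ ⟨by simp, by simp⟩ (by simp)

theorem mdInfluence_true (lam : ℝ) (a b : Sym2 V) :
    mdInfluence G lam a b (fun _ => True) =
      mdMass G lam (fun M => a ∈ M ∧ b ∈ M) / mdMass G lam (fun M => a ∈ M)
        - mdMass G lam (fun M => a ∉ M ∧ b ∈ M) / mdMass G lam (fun M => a ∉ M) := by
  simp only [mdInfluence, mdCondPr, and_true]
  congr 2 <;> exact mdMass_congr lam fun M => and_comm

/-- Influences multiply along a two-state Markov chain. With `x, y` the states of the first two
sites, `pxy` is their joint mass, `qy` the mass of `y` together with state `1` of the third site,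
`Gy` the mass of `y`, and `axy` the mass of `x, y` together with state `1` of the third site. -/
theorem markov_chain_algebra {p11 p10 p01 p00 q1 q0 G1 G0 a11 a10 a01 a00 : ℝ}
    (hG1 : 0 < G1) (hG0 : 0 < G0) (hE1 : 0 < p11 + p10) (hE0 : 0 < p01 + p00)
    (h11 : a11 * G1 = p11 * q1) (h10 : a10 * G0 = p10 * q0)
    (h01 : a01 * G1 = p01 * q1) (h00 : a00 * G0 = p00 * q0) :
    (a11 + a10) / (p11 + p10) - (a01 + a00) / (p01 + p00)
      = (p11 / (p11 + p10) - p01 / (p01 + p00)) * (q1 / G1 - q0 / G0) := by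
  rw [eq_div_of_mul_eq hG1.ne' h11, eq_div_of_mul_eq hG0.ne' h10,
    eq_div_of_mul_eq hG1.ne' h01, eq_div_of_mul_eq hG0.ne' h00]
  field_simp
  ring

end Exchange

/-- **Factorization of pairwise influences in trees** (Lemma 6.9): if `g` separates `e`
from `f` in a tree `T`, then `I_T(e→f) = I_T(e→g)·I_T(g→f)` in the monomer-dimer model. -/
theorem tree_influence_factorization
    (lam : ℝ) (hlam : 0 < lam)
    {V : Type} [Fintype V] [DecidableEq V]
    (T : SimpleGraph V) (htree : T.IsTree)
    (e g f : Sym2 V)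
    (hee : e ∈ T.edgeSet) (hg : g ∈ T.edgeSet) (hff : f ∈ T.edgeSet)
    (heg : e ≠ g) (hgf : g ≠ f) (hef : e ≠ f)
    (hsep : ∀ u : V, u ∈ e → ∀ w : V, w ∈ f → ¬(T.deleteEdges {g}).Reachable u w) :
    mdInfluence T lam e f (fun _ => True) =
      mdInfluence T lam e g (fun _ => True) * mdInfluence T lam g f (fun _ => True) := by
  obtain ⟨u, hu⟩ : ∃ u, u ∈ e := ⟨_, Sym2.out_fst_mem e⟩
  obtain ⟨w, hw⟩ : ∃ w, w ∈ f := ⟨_, Sym2.out_fst_mem f⟩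
  have hL := cutOff_component T g u
  have he : e ≠ g ∧ ∀ v ∈ e, (T.deleteEdges {g}).Reachable u v := by
    refine ⟨heg, fun v hv => ?_⟩
    by_cases huv : u = v
    · rw [huv]
    have he' : e = s(u, v) := (Sym2.mem_and_mem_iff huv).1 ⟨hu, hv⟩
    subst he'
    apply SimpleGraph.Adj.reachable
    rw [SimpleGraph.deleteEdges_adj]
    exact ⟨hee, heg⟩
  have hf : ¬ (f ≠ g ∧ ∀ v ∈ f, (T.deleteEdges {g}).Reachable u v) :=
    fun h => hsep u hu w hw (h.2 w hw)
  have h11 := mdMass_markov lam hL he hf (fun p => p) (fun p => p) (by tauto)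
  have h10 := mdMass_markov lam hL he hf (fun p => p) (fun p => ¬ p) (by tauto)
  have h01 := mdMass_markov lam hL he hf (fun p => ¬ p) (fun p => p) (by tauto)
  have h00 := mdMass_markov lam hL he hf (fun p => ¬ p) (fun p => ¬ p) (by tauto)
  -- Total probability over the state of `g`, for the event `f ∈ M` jointly with a state of `e`.
  have tot : ∀ A : Finset (Sym2 V) → Prop, mdMass T lam (fun M => A M ∧ f ∈ M)
      = mdMass T lam (fun M => A M ∧ g ∈ M ∧ f ∈ M)
        + mdMass T lam (fun M => A M ∧ g ∉ M ∧ f ∈ M) := by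
    intro A
    rw [mdMass_split lam _ (fun M => g ∈ M)]
    congr 1 <;> exact mdMass_congr lam fun M => by tauto
  have hE1 := mdMass_mem_pos hlam hee
  have hE0 := mdMass_not_mem_pos (G := T) hlam e
  rw [mdInfluence_true, mdInfluence_true, mdInfluence_true,
    tot (fun M => e ∈ M), tot (fun M => e ∉ M)]
  rw [mdMass_split lam (fun M => e ∈ M) (fun M => g ∈ M)] at hE1 ⊢
  rw [mdMass_split lam (fun M => e ∉ M) (fun M => g ∈ M)] at hE0 ⊢
  exact markov_chain_algebra (mdMass_mem_pos hlam hg) (mdMass_not_mem_pos hlam g) hE1 hE0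
    h11 h10 h01 h00
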